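/- Let ε, p ∈ (0,1] be constants and let x = (x₁, x₂, u) be a configuration with x₁ ∈ [ε·n, x₂] and u ≤ n/2, and set p_s = 1 − x₁/x₂. There exist constants c, C > 0 (depending only on ε and p) such that whenever p_s − p ≥ c·√(log n / n), the chain USD_p started from x satisfies Pr[T₂ ≤ C·n·log n] ≥ 1 − C·n^{-1}, where T₂ = inf{t ≥ 0 : X₂(t) = n}. -/

import Mathlib

open MeasureTheory

/-- The one-step transition probability of the stubborn undecided-state dynamics `USD_p`
with `n` agents, from configuration `c = (x₁, x₂, u)` to configuration `d`. -/
noncomputable def usdStep (n : ℕ) (p : ℝ) (c d : ℕ × ℕ × ℕ) : ℝ :=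
  (if d = (c.1 - 1, c.2.1, c.2.2 + 1) then (1 - p) * (c.1 : ℝ) * (c.2.1 : ℝ) / (n : ℝ) ^ 2 else 0) +
  (if d = (c.1, c.2.1 - 1, c.2.2 + 1) then (c.1 : ℝ) * (c.2.1 : ℝ) / (n : ℝ) ^ 2 else 0) +
  (if d = (c.1 + 1, c.2.1, c.2.2 - 1) then (c.2.2 : ℝ) * (c.1 : ℝ) / (n : ℝ) ^ 2 else 0) +
  (if d = (c.1, c.2.1 + 1, c.2.2 - 1) then (c.2.2 : ℝ) * (c.2.1 : ℝ) / (n : ℝ) ^ 2 else 0) +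
  (if d = c then
    1 - ((2 - p) * (c.1 : ℝ) * (c.2.1 : ℝ) + (c.2.2 : ℝ) * ((c.1 : ℝ) + (c.2.1 : ℝ))) / (n : ℝ) ^ 2
  else 0)

/-- `μ` is the law of the trajectory `(X(t))_{t ≥ 0}` of `USD_p` with `n` agents started
from the configuration `x0`: it is a probability measure on paths whose finite-dimensional
cylinder probabilities are the products of the one-step transition probabilities. -/
def IsUSD (n : ℕ) (p : ℝ) (x0 : ℕ × ℕ × ℕ) (μ : Measure (ℕ → ℕ × ℕ × ℕ)) : Prop :=
  IsProbabilityMeasure μ ∧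
  ∀ (t : ℕ) (seq : ℕ → ℕ × ℕ × ℕ),
    (μ {ω | ∀ i ≤ t, ω i = seq i}).toReal =
      (if seq 0 = x0 then (1 : ℝ) else 0) *
        ∏ i ∈ Finset.range t, usdStep n p (seq i) (seq (i + 1))

/-- The weighted bias `Δ_w = x₁ - (1 - p)·x₂` of a configuration. -/
noncomputable def dw (p : ℝ) (c : ℕ × ℕ × ℕ) : ℝ := (c.1 : ℝ) - (1 - p) * (c.2.1 : ℝ)

/-!
Applying the transition operator `s` times to the indicator of the configurations other than
consensus on Opinion 2 gives the failure probability at time `s` as a function of the initial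
configuration. It is therefore dominated by every supersolution of this backward recursion, and
the supersolution inequality matters only where the supersolution is smaller than `1`.

Exponentials of the weighted bias `Δ_w = x₁ - (1 - p) x₂` and of `u` supply the supersolutions, as
`𝔼[Δ_w(t + 1) ∣ X(t)] = (1 + u / n²) Δ_w`. Let `θ = (1 - p) / 32`. While `-4θn ≤ Δ_w ≤ 0`, an
undecided pool of size at most `θn` has drift at least `2θ`, so after `n` steps it has order `n`,
and from then on `Δ_w` grows in expectation by a factor `1 + θ / (2n)` per step. A lead of order
`√(n log n)` survives the fluctuations and exceeds `γn`, where `γ = 4θ`, after `O(n log n)` steps.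
Then a lead of `γn / 2` is kept with high probability, and under it `u + (16 n / γ) · x₁ / x₂`
contracts in expectation by a factor `1 - γ / (8n)` per step, while a value below `1` forces
`x₁ = u = 0`.
-/

lemma log_pow_le_factorial_mul {x : ℝ} (hx : 1 ≤ x) (k : ℕ) : Real.log x ^ k ≤ k.factorial * x := by
  have h := Real.pow_div_factorial_le_exp (Real.log x) (Real.log_nonneg hx) k
  rwa [Real.exp_log (by linarith), div_le_iff₀' (by positivity)] at h

lemma pow_mul_exp_neg_mul_le {a x : ℝ} (ha : 0 < a) (hx : 0 ≤ x) (k : ℕ) :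
    x ^ k * Real.exp (-(a * x)) ≤ k.factorial / a ^ k := by
  have h := Real.pow_div_factorial_le_exp (a * x) (by positivity) k
  rw [div_le_iff₀' (by positivity), mul_pow] at h
  rwa [Real.exp_neg, ← div_eq_mul_inv, div_le_div_iff₀ (Real.exp_pos _) (by positivity), mul_comm]

lemma exp_half_le_one_add {x : ℝ} (hx : 0 ≤ x) (hx1 : x ≤ 1) : Real.exp (x / 2) ≤ 1 + x := by
  have h := Real.abs_exp_sub_one_sub_id_le (x := x / 2) (abs_le.2 ⟨by linarith, by linarith⟩)
  nlinarith [(abs_le.1 h).2]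

lemma natCeil_mul_le {a z : ℝ} (ha : 0 ≤ a) (hz : 1 ≤ z) : (⌈a * z⌉₊ : ℝ) ≤ (a + 1) * z := by
  linarith [Nat.ceil_lt_add_one (show 0 ≤ a * z by positivity)]

lemma sqrt_log_div_le_one (n : ℕ) : √(Real.log n / n) ≤ 1 :=
  Real.sqrt_le_one.2 (div_le_one_of_le₀ (Real.log_le_self n.cast_nonneg) n.cast_nonneg)

lemma half_le_log_natCast {n : ℕ} (hn : 2 ≤ n) : 1 / 2 ≤ Real.log n := by
  have hlog : Real.log 2 ≤ Real.log n := Real.log_le_log two_pos (by exact_mod_cast hn)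
  linarith [Real.log_two_gt_d9]

lemma one_le_natCast_mul_log {n : ℕ} (hn : 2 ≤ n) : 1 ≤ n * Real.log n := by
  have hn' : (2 : ℝ) ≤ n := by exact_mod_cast hn
  nlinarith [half_le_log_natCast hn]

lemma natCast_le_one_add_div_pow {n : ℕ} (hn : 2 ≤ n) {θ : ℝ} (hθ : 0 < θ) (hθ1 : θ ≤ 1) :
    n ≤ (1 + θ / (2 * n)) ^ ⌈4 / θ * (n * Real.log n)⌉₊ := by
  have hn' : (2 : ℝ) ≤ n := by exact_mod_cast hn
  have hrate : θ / (2 * n) ≤ 1 := (div_le_one (by linarith)).2 (by linarith)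
  set N := ⌈4 / θ * (n * Real.log n)⌉₊
  calc (n : ℝ) = Real.exp (4 / θ * (n * Real.log n) * (θ / (2 * n) / 2)) := by
        rw [show 4 / θ * (n * Real.log n) * (θ / (2 * n) / 2) = Real.log n by field_simp; ring,
          Real.exp_log (by linarith)]
    _ ≤ Real.exp (N * (θ / (2 * n) / 2)) := by gcongr; exact Nat.le_ceil _
    _ = Real.exp (θ / (2 * n) / 2) ^ N := Real.exp_nat_mul _ _
    _ ≤ (1 + θ / (2 * n)) ^ N := by gcongr; exact exp_half_le_one_add (by positivity) hrate

section TransitionOperator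

variable {α : Type*} {K : α → α →₀ ℝ} {X : Set α} {f g : α → ℝ} {x : α}

/-- The operator `f ↦ (x ↦ 𝔼[f (X₁) ∣ X₀ = x])` of the Markov chain on `α` whose transition
probabilities from `x` are the finitely supported weights `K x`. -/
noncomputable def transitionOp (K : α → α →₀ ℝ) : Module.End ℝ (α → ℝ) where
  toFun f x := (K x).sum fun y w ↦ w * f y
  map_add' f g := by ext x; simp [Finsupp.sum, mul_add, Finset.sum_add_distrib]
  map_smul' a f := by ext x; simp [Finsupp.sum, Finset.mul_sum, mul_left_comm]

lemma transitionOp_apply (K : α → α →₀ ℝ) (f : α → ℝ) (x : α) :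
    transitionOp K f x = ∑ y ∈ (K x).support, K x y * f y := rfl

lemma transitionOp_fun_add (K : α → α →₀ ℝ) (f g : α → ℝ) (x : α) :
    transitionOp K (fun y ↦ f y + g y) x = transitionOp K f x + transitionOp K g x :=
  congrFun (map_add (transitionOp K) f g) x

lemma transitionOp_const_mul (K : α → α →₀ ℝ) (a : ℝ) (f : α → ℝ) (x : α) :
    transitionOp K (fun y ↦ a * f y) x = a * transitionOp K f x :=
  congrFun (map_smul (transitionOp K) a f) x

/-- `K` restricts to a stochastic kernel on the set `X`, which the chain never leaves. -/
structure IsStochasticOn (K : α → α →₀ ℝ) (X : Set α) : Prop where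
  nonneg : ∀ x ∈ X, 0 ≤ K x
  transitionOp_one : ∀ x ∈ X, transitionOp K 1 x = 1
  mem_of_mem_support : ∀ x ∈ X, ∀ y ∈ (K x).support, y ∈ X

/-- `f` is at most `1` and superharmonic for `K` on `X`. Examples are the probabilities, as
functions of the starting point, of not having been absorbed before a given time. -/
structure IsSuperharmonicLEOne (K : α → α →₀ ℝ) (X : Set α) (f : α → ℝ) : Prop where
  le_one : ∀ x ∈ X, f x ≤ 1
  transitionOp_le : ∀ x ∈ X, transitionOp K f x ≤ f x

namespace IsStochasticOn

variable (hK : IsStochasticOn K X)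
include hK

lemma transitionOp_mono_of_support (hx : x ∈ X) (hfg : ∀ y ∈ (K x).support, f y ≤ g y) :
    transitionOp K f x ≤ transitionOp K g x :=
  Finset.sum_le_sum fun y hy ↦ mul_le_mul_of_nonneg_left (hfg y hy) (hK.nonneg x hx y)

lemma transitionOp_mono (hfg : ∀ y ∈ X, f y ≤ g y) (hx : x ∈ X) :
    transitionOp K f x ≤ transitionOp K g x :=
  hK.transitionOp_mono_of_support hx fun y hy ↦ hfg y (hK.mem_of_mem_support x hx y hy)

lemma transitionOp_const (a : ℝ) (hx : x ∈ X) : transitionOp K (fun _ ↦ a) x = a := by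
  have h := transitionOp_const_mul K a 1 x
  simpa only [Pi.one_apply, mul_one, hK.transitionOp_one x hx] using h

lemma transitionOp_add_const (f : α → ℝ) (a : ℝ) (hx : x ∈ X) :
    transitionOp K (fun y ↦ f y + a) x = transitionOp K f x + a := by
  rw [transitionOp_fun_add, hK.transitionOp_const a hx]

lemma transitionOp_pow_mono (hfg : ∀ y ∈ X, f y ≤ g y) (s : ℕ) :
    ∀ x ∈ X, (transitionOp K ^ s) f x ≤ (transitionOp K ^ s) g x := by
  induction s with
  | zero => exact hfg
  | succ s ih =>
    intro x hx
    simpa only [pow_succ', Module.End.mul_apply] using hK.transitionOp_mono ih hx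

lemma transitionOp_pow_one (s : ℕ) : ∀ x ∈ X, (transitionOp K ^ s) 1 x = 1 := by
  induction s with
  | zero => intro x _; rfl
  | succ s ih =>
    intro x hx
    rw [pow_succ', Module.End.mul_apply]
    refine le_antisymm ?_ ?_
    · exact (hK.transitionOp_mono (fun y hy ↦ (ih y hy).le) hx).trans_eq
        (hK.transitionOp_const 1 hx)
    · exact (hK.transitionOp_const 1 hx).symm.trans_le
        (hK.transitionOp_mono (fun y hy ↦ (ih y hy).ge) hx)

lemma transitionOp_pow_indicator_compl (A : Set α) (s : ℕ) (hx : x ∈ X) :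
    (transitionOp K ^ s) (Aᶜ.indicator 1) x = 1 - (transitionOp K ^ s) (A.indicator 1) x := by
  rw [Set.indicator_compl, map_sub, Pi.sub_apply, hK.transitionOp_pow_one s x hx]

lemma transitionOp_exp_le {ψ : α → ℝ} {l : ℝ} (hl : l ≤ 1) (hx : x ∈ X)
    (hψ : ∀ y ∈ (K x).support, |ψ y - ψ x| ≤ l) :
    transitionOp K (fun y ↦ Real.exp (ψ y)) x ≤
      Real.exp (ψ x) * (1 + (transitionOp K ψ x - ψ x) + l ^ 2) := by
  have hexp : ∀ y ∈ (K x).support,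
      Real.exp (ψ y) ≤ Real.exp (ψ x) * ψ y + Real.exp (ψ x) * (1 - ψ x + l ^ 2) := by
    intro y hy
    have hquad := (abs_le.1 (Real.abs_exp_sub_one_sub_id_le ((hψ y hy).trans hl))).2
    have hsq : (ψ y - ψ x) ^ 2 ≤ l ^ 2 := sq_le_sq' (abs_le.1 (hψ y hy)).1 (abs_le.1 (hψ y hy)).2
    calc Real.exp (ψ y) = Real.exp (ψ x) * Real.exp (ψ y - ψ x) := by rw [← Real.exp_add]; simp
      _ ≤ Real.exp (ψ x) * (1 + (ψ y - ψ x) + l ^ 2) := by gcongr; linarith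
      _ = Real.exp (ψ x) * ψ y + Real.exp (ψ x) * (1 - ψ x + l ^ 2) := by ring
  refine (hK.transitionOp_mono_of_support hx hexp).trans_eq ?_
  rw [hK.transitionOp_add_const _ _ hx, transitionOp_const_mul]
  ring

lemma isSuperharmonicLEOne_indicator_compl {A : Set α}
    (hA : ∀ x ∈ X, x ∈ A → ∀ y ∈ (K x).support, y ∈ A) :
    IsSuperharmonicLEOne K X (Aᶜ.indicator 1) where
  le_one x _ := Set.indicator_le_self' (fun _ _ ↦ zero_le_one) x
  transitionOp_le x hx := by
    by_cases hxA : x ∈ A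
    · have hzero : ∀ y ∈ (K x).support, Aᶜ.indicator (1 : α → ℝ) y ≤ 0 := fun y hy ↦
        (Set.indicator_of_notMem (Set.notMem_compl_iff.2 (hA x hx hxA y hy)) _).le
      rw [Set.indicator_of_notMem (Set.notMem_compl_iff.2 hxA)]
      exact (hK.transitionOp_mono_of_support hx hzero).trans_eq (hK.transitionOp_const 0 hx)
    · rw [Set.indicator_of_mem (Set.mem_compl hxA)]
      exact (hK.transitionOp_mono (fun y _ ↦ Set.indicator_le_self' (fun _ _ ↦ zero_le_one) y)
        hx).trans_eq (hK.transitionOp_one x hx)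

lemma isSuperharmonicLEOne_pow (hf : IsSuperharmonicLEOne K X f) (s : ℕ) :
    IsSuperharmonicLEOne K X ((transitionOp K ^ s) f) where
  le_one x hx :=
    (hK.transitionOp_pow_mono hf.le_one s x hx).trans_eq (hK.transitionOp_pow_one s x hx)
  transitionOp_le x hx := by
    rw [← Module.End.mul_apply, ← pow_succ', pow_succ, Module.End.mul_apply]
    exact hK.transitionOp_pow_mono hf.transitionOp_le s x hx

lemma transitionOp_pow_le (hf : IsSuperharmonicLEOne K X f) (s : ℕ) (hx : x ∈ X) :
    (transitionOp K ^ s) f x ≤ f x := by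
  induction s with
  | zero => rfl
  | succ s ih =>
    rw [pow_succ', Module.End.mul_apply]
    exact ((hK.isSuperharmonicLEOne_pow hf s).transitionOp_le x hx).trans ih

/-- Comparison principle: the supersolution property of `G` is only needed where the bound it
gives is not trivial and `f` is not already known to be at most `η`. -/
lemma transitionOp_pow_le_of_supersolution (hf : IsSuperharmonicLEOne K X f) {A : Set α} {η : ℝ}
    (hη : 0 ≤ η) (hfA : ∀ x ∈ X, x ∈ A → f x ≤ η) {G : ℕ → α → ℝ} (hG : ∀ s x, 0 ≤ G s x)
    (hzero : ∀ x ∈ X, x ∉ A → G 0 x < 1 → f x ≤ G 0 x + η)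
    (s : ℕ)
    (hsucc : ∀ t < s, ∀ x ∈ X, x ∉ A → G (t + 1) x < 1 → transitionOp K (G t) x ≤ G (t + 1) x) :
    ∀ x ∈ X, (transitionOp K ^ s) f x ≤ G s x + η := by
  have htrivial : ∀ s, ∀ x ∈ X, (x ∉ A → G s x < 1 → (transitionOp K ^ s) f x ≤ G s x + η) →
      (transitionOp K ^ s) f x ≤ G s x + η := by
    intro s x hx hmain
    by_cases hxA : x ∈ A
    · linarith [hK.transitionOp_pow_le hf s hx, hfA x hx hxA, hG s x]
    · rcases lt_or_ge (G s x) 1 with hlt | hge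
      · exact hmain hxA hlt
      · linarith [(hK.isSuperharmonicLEOne_pow hf s).le_one x hx]
  induction s with
  | zero => exact fun x hx ↦ htrivial 0 x hx (hzero x hx)
  | succ s ih =>
    refine fun x hx ↦ htrivial (s + 1) x hx fun hxA hlt ↦ ?_
    have hstep := hK.transitionOp_mono (ih fun t ht ↦ hsucc t (ht.trans s.lt_succ_self)) hx
    rw [hK.transitionOp_add_const _ _ hx] at hstep
    rw [pow_succ', Module.End.mul_apply]
    linarith [hsucc s s.lt_succ_self x hx hxA hlt]

end IsStochasticOn

end TransitionOperator

section PathMeasure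

variable {α : Type*}

/-- The paths that agree with `ξ` up to and including time `t`. -/
def pathCylinder (t : ℕ) (ξ : ℕ → α) : Set (ℕ → α) := {ω | ∀ i ≤ t, ω i = ξ i}

lemma pathCylinder_succ_update (t : ℕ) (ξ : ℕ → α) (y : α) :
    pathCylinder (t + 1) (Function.update ξ (t + 1) y) =
      (fun ω ↦ ω (t + 1)) ⁻¹' {y} ∩ pathCylinder t ξ := by
  ext ω
  simp only [pathCylinder, Nat.le_succ_iff_eq_or_le, forall_eq_or_imp, Function.update_self,
    Set.mem_inter_iff, Set.mem_preimage, Set.mem_singleton_iff, Set.mem_ofPred_eq]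
  refine and_congr_right' (forall₂_congr fun i hi ↦ ?_)
  rw [Function.update_of_ne (by omega)]

variable [MeasurableSpace α] {K : α → α →₀ ℝ} {μ : Measure (ℕ → α)}

/-- Under `μ` the coordinate process moves according to the transition probabilities `K`. -/
def HasTransitions (μ : Measure (ℕ → α)) (K : α → α →₀ ℝ) : Prop :=
  ∀ t ξ, μ.real (pathCylinder (t + 1) ξ) = μ.real (pathCylinder t ξ) * K (ξ t) (ξ (t + 1))

lemma HasTransitions.measureReal_pathCylinder_update (hμ : HasTransitions μ K) (t : ℕ)
    (ξ : ℕ → α) (y : α) : μ.real (pathCylinder (t + 1) (Function.update ξ (t + 1) y)) =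
      μ.real (pathCylinder t ξ) * K (ξ t) y := by
  have hpast : pathCylinder t (Function.update ξ (t + 1) y) = pathCylinder t ξ := by
    ext ω
    refine forall₂_congr fun i hi ↦ ?_
    rw [Function.update_of_ne (by omega)]
  rw [hμ, hpast, Function.update_self, Function.update_of_ne (by omega)]

variable [MeasurableSingletonClass α] [IsFiniteMeasure μ]

lemma HasTransitions.pathCylinder_mul_pow_le (hμ : HasTransitions μ K) {A : Set α} (s : ℕ) :
    ∀ t ξ, μ.real (pathCylinder t ξ) * (transitionOp K ^ s) (A.indicator 1) (ξ t) ≤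
      μ.real (pathCylinder t ξ ∩ {ω | ω (t + s) ∈ A}) := by
  induction s with
  | zero =>
    intro t ξ
    by_cases hξ : ξ t ∈ A
    · have hsub : pathCylinder t ξ ∩ {ω | ω t ∈ A} = pathCylinder t ξ :=
        Set.inter_eq_left.2 fun ω hω ↦ by rwa [Set.mem_ofPred_eq, hω t le_rfl]
      simp [hsub, hξ]
    · simp [hξ, measureReal_nonneg]
  | succ s ih =>
    intro t ξ
    set B : Set (ℕ → α) := pathCylinder t ξ ∩ {ω | ω (t + (s + 1)) ∈ A}
    have hmeas : ∀ y : α, MeasurableSet ((fun ω : ℕ → α ↦ ω (t + 1)) ⁻¹' {y}) := fun y ↦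
      measurable_pi_apply (t + 1) (measurableSet_singleton y)
    have hfiber : ∀ y, μ.real (pathCylinder t ξ) *
        (K (ξ t) y * (transitionOp K ^ s) (A.indicator 1) y) ≤
          (μ.restrict B).real ((fun ω ↦ ω (t + 1)) ⁻¹' {y}) := by
      intro y
      have hy := ih (t + 1) (Function.update ξ (t + 1) y)
      rw [hμ.measureReal_pathCylinder_update, Function.update_self, pathCylinder_succ_update,
        Set.inter_assoc, add_right_comm, add_assoc] at hy
      rwa [measureReal_restrict_apply (hmeas y), ← mul_assoc]
    rw [pow_succ', Module.End.mul_apply, transitionOp_apply, Finset.mul_sum]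
    calc ∑ y ∈ (K (ξ t)).support, μ.real (pathCylinder t ξ) *
          (K (ξ t) y * (transitionOp K ^ s) (A.indicator 1) y)
        ≤ ∑ y ∈ (K (ξ t)).support, (μ.restrict B).real ((fun ω ↦ ω (t + 1)) ⁻¹' {y}) :=
          Finset.sum_le_sum fun y _ ↦ hfiber y
      _ = (μ.restrict B).real ((fun ω ↦ ω (t + 1)) ⁻¹' (K (ξ t)).support) :=
          sum_measureReal_preimage_singleton _ fun y _ ↦ hmeas y
      _ ≤ (μ.restrict B).real Set.univ := measureReal_mono (Set.subset_univ _)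
      _ = μ.real B := by simp

lemma HasTransitions.one_sub_pow_indicator_compl_le (hμ : HasTransitions μ K) {X : Set α}
    (hK : IsStochasticOn K X) {x : α} (hx : x ∈ X) (hstart : μ.real {ω | ω 0 = x} = 1)
    (A : Set α) (s : ℕ) :
    1 - (transitionOp K ^ s) (Aᶜ.indicator 1) x ≤ μ.real {ω | ω s ∈ A} := by
  have hcyl : pathCylinder 0 (fun _ ↦ x) = {ω : ℕ → α | ω 0 = x} := by ext; simp [pathCylinder]
  have hpath := hμ.pathCylinder_mul_pow_le (A := A) s 0 fun _ ↦ x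
  rw [hcyl, hstart, one_mul, zero_add] at hpath
  rw [hK.transitionOp_pow_indicator_compl A s hx, sub_sub_cancel]
  exact hpath.trans (measureReal_mono Set.inter_subset_right)

end PathMeasure

section UndecidedStateDynamics

variable {n : ℕ} {p : ℝ} {c : ℕ × ℕ × ℕ}

/-- The configurations of `n` agents. -/
def usdConfig (n : ℕ) : Set (ℕ × ℕ × ℕ) := {c | c.1 + c.2.1 + c.2.2 = n}

/-- The configurations in which all `n` agents hold Opinion 2, provided there are `n` agents. -/
def usdConsensus (n : ℕ) : Set (ℕ × ℕ × ℕ) := {c | c.2.1 = n}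

/-- The transition probabilities `usdStep n p` as finitely supported functions. -/
noncomputable def usdKernel (n : ℕ) (p : ℝ) (c : ℕ × ℕ × ℕ) : ℕ × ℕ × ℕ →₀ ℝ :=
  .single (c.1 - 1, c.2.1, c.2.2 + 1) ((1 - p) * c.1 * c.2.1 / n ^ 2) +
  .single (c.1, c.2.1 - 1, c.2.2 + 1) (c.1 * c.2.1 / n ^ 2) +
  .single (c.1 + 1, c.2.1, c.2.2 - 1) (c.2.2 * c.1 / n ^ 2) +
  .single (c.1, c.2.1 + 1, c.2.2 - 1) (c.2.2 * c.2.1 / n ^ 2) +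
  .single c (1 - ((2 - p) * c.1 * c.2.1 + c.2.2 * (c.1 + c.2.1)) / n ^ 2)

/-- The transition operator of `USD_p` with `n` agents. -/
noncomputable abbrev usdOp (n : ℕ) (p : ℝ) : Module.End ℝ (ℕ × ℕ × ℕ → ℝ) :=
  transitionOp (usdKernel n p)

lemma usdKernel_apply (n : ℕ) (p : ℝ) (c d : ℕ × ℕ × ℕ) : usdKernel n p c d = usdStep n p c d := by
  simp only [usdKernel, usdStep, Finsupp.add_apply, Finsupp.single_apply, eq_comm]

lemma usdOp_apply (n : ℕ) (p : ℝ) (f : ℕ × ℕ × ℕ → ℝ) (c : ℕ × ℕ × ℕ) :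
    usdOp n p f c =
      (1 - p) * c.1 * c.2.1 / n ^ 2 * f (c.1 - 1, c.2.1, c.2.2 + 1) +
      c.1 * c.2.1 / n ^ 2 * f (c.1, c.2.1 - 1, c.2.2 + 1) +
      c.2.2 * c.1 / n ^ 2 * f (c.1 + 1, c.2.1, c.2.2 - 1) +
      c.2.2 * c.2.1 / n ^ 2 * f (c.1, c.2.1 + 1, c.2.2 - 1) +
      (1 - ((2 - p) * c.1 * c.2.1 + c.2.2 * (c.1 + c.2.1)) / n ^ 2) * f c := by
  have hadd (g h : ℕ × ℕ × ℕ →₀ ℝ) :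
      (g + h).sum (fun d w ↦ w * f d) = g.sum (fun d w ↦ w * f d) + h.sum (fun d w ↦ w * f d) :=
    Finsupp.sum_add_index' (fun _ ↦ zero_mul _) fun _ _ _ ↦ add_mul _ _ _
  have hsingle (d : ℕ × ℕ × ℕ) (w : ℝ) : (Finsupp.single d w).sum (fun d w ↦ w * f d) = w * f d :=
    Finsupp.sum_single_index (zero_mul _)
  simp only [transitionOp, usdKernel, LinearMap.coe_mk, AddHom.coe_mk, hadd, hsingle]

lemma natCast_mul_apply_sub_one (x : ℕ) (g : ℝ → ℝ) : (x : ℝ) * g (x - 1 : ℕ) = x * g (x - 1) := by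
  cases x <;> simp

/-- The coefficient of `1 / n ^ 2` is the generator of the dynamics; a transition with a truncated
subtraction has probability zero, so the subtractions may be carried out in `ℝ`. -/
lemma usdOp_apply_natCast (n : ℕ) (p : ℝ) (F : ℝ → ℝ → ℝ → ℝ) (c : ℕ × ℕ × ℕ) :
    usdOp n p (fun c ↦ F c.1 c.2.1 c.2.2) c = F c.1 c.2.1 c.2.2 +
      ((1 - p) * c.1 * c.2.1 * (F (c.1 - 1) c.2.1 (c.2.2 + 1) - F c.1 c.2.1 c.2.2) +
        c.1 * c.2.1 * (F c.1 (c.2.1 - 1) (c.2.2 + 1) - F c.1 c.2.1 c.2.2) +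
        c.2.2 * c.1 * (F (c.1 + 1) c.2.1 (c.2.2 - 1) - F c.1 c.2.1 c.2.2) +
        c.2.2 * c.2.1 * (F c.1 (c.2.1 + 1) (c.2.2 - 1) - F c.1 c.2.1 c.2.2)) / n ^ 2 := by
  obtain ⟨x, y, u⟩ := c
  have hx := natCast_mul_apply_sub_one x fun z ↦ F z y (u + 1)
  have hy := natCast_mul_apply_sub_one y fun z ↦ F x z (u + 1)
  have hux := natCast_mul_apply_sub_one u fun z ↦ F (x + 1) y z
  have huy := natCast_mul_apply_sub_one u fun z ↦ F x (y + 1) z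
  rw [usdOp_apply]
  push_cast
  linear_combination (1 - p) * y / n ^ 2 * hx + x / n ^ 2 * hy + x / n ^ 2 * hux + y / n ^ 2 * huy

lemma usdConfig_natCast_sum (hc : c ∈ usdConfig n) : (c.1 : ℝ) + c.2.1 + c.2.2 = n := by
  exact_mod_cast congrArg (Nat.cast (R := ℝ)) (show c.1 + c.2.1 + c.2.2 = n from hc)

lemma eq_or_adjacent_of_mem_support_usdKernel {d : ℕ × ℕ × ℕ}
    (hd : d ∈ (usdKernel n p c).support) :
    d = c ∨
      (d.1 + 1 = c.1 ∧ d.2.1 = c.2.1 ∧ d.2.2 = c.2.2 + 1) ∨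
      (0 < c.1 ∧ d.1 = c.1 ∧ d.2.1 + 1 = c.2.1 ∧ d.2.2 = c.2.2 + 1) ∨
      (d.1 = c.1 + 1 ∧ d.2.1 = c.2.1 ∧ d.2.2 + 1 = c.2.2) ∨
      (d.1 = c.1 ∧ d.2.1 = c.2.1 + 1 ∧ d.2.2 + 1 = c.2.2) := by
  have hsplit {g : ℕ × ℕ × ℕ →₀ ℝ} {a : ℕ × ℕ × ℕ} {w : ℝ} (hd : d ∈ (g + .single a w).support) :
      d ∈ g.support ∨ d = a ∧ w ≠ 0 :=
    (Finset.mem_union.1 (Finsupp.support_add hd)).imp_right (Finsupp.mem_support_single _ _ _).1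
  rcases hsplit hd with hd | ⟨rfl, -⟩
  · rcases hsplit hd with hd | ⟨rfl, hw⟩
    · rcases hsplit hd with hd | ⟨rfl, hw⟩
      · rcases hsplit hd with hd | ⟨rfl, hw⟩
        · obtain ⟨rfl, hw⟩ := (Finsupp.mem_support_single _ _ _).1 hd
          have hx : c.1 ≠ 0 := fun h ↦ by simp [h] at hw
          exact .inr (.inl ⟨Nat.sub_one_add_one hx, rfl, rfl⟩)
        · have hx : c.1 ≠ 0 := fun h ↦ by simp [h] at hw
          have hy : c.2.1 ≠ 0 := fun h ↦ by simp [h] at hw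
          exact .inr (.inr (.inl ⟨Nat.pos_of_ne_zero hx, rfl, Nat.sub_one_add_one hy, rfl⟩))
      · have hu : c.2.2 ≠ 0 := fun h ↦ by simp [h] at hw
        exact .inr (.inr (.inr (.inl ⟨rfl, rfl, Nat.sub_one_add_one hu⟩)))
    · have hu : c.2.2 ≠ 0 := fun h ↦ by simp [h] at hw
      exact .inr (.inr (.inr (.inr ⟨rfl, rfl, Nat.sub_one_add_one hu⟩)))
  · exact .inl rfl

lemma usd_total_rate_le_one (hp : 0 ≤ p) (hc : c ∈ usdConfig n) :
    ((2 - p) * c.1 * c.2.1 + c.2.2 * (c.1 + c.2.1)) / (n : ℝ) ^ 2 ≤ 1 := by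
  have hxy : (0 : ℝ) ≤ p * (c.1 * c.2.1) := by positivity
  refine div_le_one_of_le₀ ?_ (sq_nonneg _)
  rw [← usdConfig_natCast_sum hc]
  have : (0 : ℝ) ≤ c.1 * c.2.2 := by positivity
  have : (0 : ℝ) ≤ c.2.1 * c.2.2 := by positivity
  linarith [sq_nonneg (c.1 : ℝ), sq_nonneg (c.2.1 : ℝ), sq_nonneg (c.2.2 : ℝ)]

lemma isStochasticOn_usdKernel (hp : p ∈ Set.Icc (0 : ℝ) 1) :
    IsStochasticOn (usdKernel n p) (usdConfig n) where
  nonneg c hc := by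
    have hrate := sub_nonneg.2 (usd_total_rate_le_one hp.1 hc)
    have hq := sub_nonneg.2 hp.2
    refine add_nonneg (add_nonneg (add_nonneg (add_nonneg ?_ ?_) ?_) ?_) ?_ <;>
      exact Finsupp.single_nonneg.2 (by positivity)
  transitionOp_one c _ := by
    rw [← usdOp, usdOp_apply]
    simp only [Pi.one_apply]
    ring
  mem_of_mem_support c hc d hd := by
    have hadj := eq_or_adjacent_of_mem_support_usdKernel hd
    simp only [usdConfig, Set.mem_ofPred_eq] at hc ⊢
    rcases hadj with rfl | hadj
    · exact hc
    · omega

lemma usdConsensus_absorbing {d : ℕ × ℕ × ℕ} (hc : c ∈ usdConfig n) (hcn : c ∈ usdConsensus n)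
    (hd : d ∈ (usdKernel n p c).support) : d ∈ usdConsensus n := by
  simp only [usdConfig, usdConsensus, Set.mem_ofPred_eq] at hc hcn ⊢
  rcases eq_or_adjacent_of_mem_support_usdKernel hd with rfl | hadj
  · exact hcn
  · omega

/-- The probability, as a function of the initial configuration, that `USD_p` has not reached
consensus on Opinion 2 by time `s`. -/
noncomputable def usdFailure (n : ℕ) (p : ℝ) (s : ℕ) : ℕ × ℕ × ℕ → ℝ :=
  (usdOp n p ^ s) ((usdConsensus n)ᶜ.indicator 1)

lemma isSuperharmonicLEOne_usdFailure (hp : p ∈ Set.Icc (0 : ℝ) 1) (s : ℕ) :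
    IsSuperharmonicLEOne (usdKernel n p) (usdConfig n) (usdFailure n p s) :=
  have hK := isStochasticOn_usdKernel hp
  hK.isSuperharmonicLEOne_pow (hK.isSuperharmonicLEOne_indicator_compl
    fun _ hc hcn _ hd ↦ usdConsensus_absorbing hc hcn hd) s

lemma usdOp_pow_usdFailure (n : ℕ) (p : ℝ) (s t : ℕ) :
    (usdOp n p ^ s) (usdFailure n p t) = usdFailure n p (s + t) := by
  rw [usdFailure, ← Module.End.mul_apply, ← pow_add, usdFailure]

lemma IsUSD.hasTransitions {μ : Measure (ℕ → ℕ × ℕ × ℕ)} (hμ : IsUSD n p c μ) :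
    HasTransitions μ (usdKernel n p) := by
  intro t ξ
  simp only [Measure.real, pathCylinder, hμ.2, Finset.prod_range_succ, usdKernel_apply, mul_assoc]

lemma IsUSD.one_sub_usdFailure_le {μ : Measure (ℕ → ℕ × ℕ × ℕ)} (hμ : IsUSD n p c μ)
    (hp : p ∈ Set.Icc (0 : ℝ) 1) (hc : c ∈ usdConfig n) (s : ℕ) :
    1 - usdFailure n p s c ≤ μ.real {ω | (ω s).2.1 = n} := by
  have := hμ.1
  have hstart : μ.real {ω | ω 0 = c} = 1 := by simpa [Measure.real] using hμ.2 0 fun _ ↦ c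
  exact hμ.hasTransitions.one_sub_pow_indicator_compl_le (isStochasticOn_usdKernel hp) hc hstart
    (usdConsensus n) s

lemma usdOp_dw (n : ℕ) (p : ℝ) (c : ℕ × ℕ × ℕ) :
    usdOp n p (dw p) c = dw p c + c.2.2 / n ^ 2 * dw p c := by
  have hdw := usdOp_apply_natCast n p (fun x y _ ↦ x - (1 - p) * y) c
  rw [show dw p = fun c ↦ (c.1 : ℝ) - (1 - p) * c.2.1 from rfl, hdw]
  ring

lemma usdOp_undecided (n : ℕ) (p : ℝ) (c : ℕ × ℕ × ℕ) :
    usdOp n p (fun c ↦ (c.2.2 : ℝ)) c =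
      c.2.2 + ((2 - p) * c.1 * c.2.1 - c.2.2 * (c.1 + c.2.1)) / n ^ 2 := by
  rw [usdOp_apply_natCast n p (fun _ _ u ↦ u) c]
  ring

lemma abs_dw_sub_le_one (hp : p ∈ Set.Icc (0 : ℝ) 1) {d : ℕ × ℕ × ℕ}
    (hd : d ∈ (usdKernel n p c).support) : |dw p d - dw p c| ≤ 1 := by
  obtain ⟨hp0, hp1⟩ := hp
  unfold dw
  rcases eq_or_adjacent_of_mem_support_usdKernel hd with
    rfl | ⟨hx, hy, -⟩ | ⟨-, hx, hy, -⟩ | ⟨hx, hy, -⟩ | ⟨hx, hy, -⟩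
  · simp
  all_goals
    have hx' := congrArg (Nat.cast (R := ℝ)) hx
    have hy' := congrArg (Nat.cast (R := ℝ)) hy
    push_cast at hx' hy'
    rw [abs_le]
    constructor <;> nlinarith

lemma abs_undecided_sub_le_one {d : ℕ × ℕ × ℕ} (hd : d ∈ (usdKernel n p c).support) :
    |(d.2.2 : ℝ) - c.2.2| ≤ 1 := by
  have hint : |(d.2.2 : ℤ) - c.2.2| ≤ 1 := by
    rcases eq_or_adjacent_of_mem_support_usdKernel hd with rfl | hadj
    · simp
    · rw [abs_le]; omega
  exact_mod_cast hint

/-! ### Exponentials of the weighted bias -/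

lemma usdOp_exp_dw_le (hp : p ∈ Set.Icc (0 : ℝ) 1) (hc : c ∈ usdConfig n) {a : ℝ}
    (ha : a ∈ Set.Icc (0 : ℝ) 1) (κ : ℝ) :
    usdOp n p (fun c ↦ Real.exp (a * dw p c + κ)) c ≤
      Real.exp (a * (1 + c.2.2 / n ^ 2) * dw p c + κ + a ^ 2) := by
  have hK := isStochasticOn_usdKernel (n := n) hp
  have hψ : ∀ d ∈ (usdKernel n p c).support, |a * dw p d + κ - (a * dw p c + κ)| ≤ a := by
    intro d hd
    rw [add_sub_add_right_eq_sub, ← mul_sub, abs_mul, abs_of_nonneg ha.1]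
    exact mul_le_of_le_one_right ha.1 (abs_dw_sub_le_one hp hd)
  have hdrift : usdOp n p (fun c ↦ a * dw p c + κ) c - (a * dw p c + κ) =
      a * (c.2.2 / n ^ 2) * dw p c := by
    rw [hK.transitionOp_add_const _ _ hc, transitionOp_const_mul, usdOp_dw]
    ring
  calc usdOp n p (fun c ↦ Real.exp (a * dw p c + κ)) c
      ≤ Real.exp (a * dw p c + κ) * (1 + a * (c.2.2 / n ^ 2) * dw p c + a ^ 2) := by
        simpa only [hdrift] using hK.transitionOp_exp_le ha.2 hc hψ
    _ ≤ Real.exp (a * dw p c + κ) * Real.exp (a * (c.2.2 / n ^ 2) * dw p c + a ^ 2) := by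
        gcongr
        linarith [Real.add_one_le_exp (a * (c.2.2 / n ^ 2) * dw p c + a ^ 2)]
    _ = Real.exp (a * (1 + c.2.2 / n ^ 2) * dw p c + κ + a ^ 2) := by
        rw [← Real.exp_add]; ring_nf

lemma usdOp_exp_dw_le_of_nonpos (hp : p ∈ Set.Icc (0 : ℝ) 1) (hc : c ∈ usdConfig n) {a : ℝ}
    (ha : a ∈ Set.Icc (0 : ℝ) 1) (κ : ℝ) (hdw : dw p c ≤ 0) :
    usdOp n p (fun c ↦ Real.exp (a * dw p c + κ)) c ≤ Real.exp (a * dw p c + κ + a ^ 2) := by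
  refine (usdOp_exp_dw_le hp hc ha κ).trans (Real.exp_le_exp.2 ?_)
  have hgrowth : a * (c.2.2 / (n : ℝ) ^ 2) * dw p c ≤ 0 :=
    mul_nonpos_of_nonneg_of_nonpos (mul_nonneg ha.1 (by positivity)) hdw
  linarith

/-- The weighted bias outgrows its variance: the quadratic term in the exponent pays for the
increments of `dw`. -/
lemma usdOp_exp_dw_le_of_undecided_ge (hp : p ∈ Set.Icc (0 : ℝ) 1) (hn : 0 < n)
    (hc : c ∈ usdConfig n) {a θ : ℝ} (ha : a ∈ Set.Icc (0 : ℝ) 1) (hθ : 0 < θ) (κ : ℝ)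
    (hdw : dw p c ≤ 0) (hu : θ / 2 * n ≤ c.2.2) :
    usdOp n p (fun c ↦ Real.exp (a * dw p c + (a ^ 2 * (2 * n / θ) + κ))) c ≤
      Real.exp (a * (1 + θ / (2 * n)) * dw p c +
        ((a * (1 + θ / (2 * n))) ^ 2 * (2 * n / θ) + κ)) := by
  refine (usdOp_exp_dw_le hp hc ha _).trans (Real.exp_le_exp.2 ?_)
  have hrate : θ / (2 * n) ≤ c.2.2 / (n : ℝ) ^ 2 := by
    rw [div_le_div_iff₀ (by positivity) (by positivity)]
    nlinarith
  have hbias : a * (1 + c.2.2 / (n : ℝ) ^ 2) * dw p c ≤ a * (1 + θ / (2 * n)) * dw p c :=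
    mul_le_mul_of_nonpos_right (mul_le_mul_of_nonneg_left (by linarith) ha.1) hdw
  have hvariance : a ^ 2 * (2 * n / θ) + a ^ 2 ≤ (a * (1 + θ / (2 * n))) ^ 2 * (2 * n / θ) := by
    have hexpand : (a * (1 + θ / (2 * n))) ^ 2 * (2 * n / θ) =
        a ^ 2 * (2 * n / θ) + 2 * a ^ 2 + a ^ 2 * (θ / (2 * n)) := by field_simp; ring
    have : 0 ≤ a ^ 2 * (θ / (2 * n)) := by positivity
    nlinarith [sq_nonneg a]
  linarith

/-! ### The undecided pool -/

lemma undecided_drift_ge_neg_one (hp : p ≤ 1) (hc : c ∈ usdConfig n) :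
    -1 ≤ usdOp n p (fun c ↦ (c.2.2 : ℝ)) c - c.2.2 := by
  have hsum := usdConfig_natCast_sum hc
  have hu : (c.2.2 : ℝ) ≤ n := by rw [← hsum]; exact le_add_of_nonneg_left (by positivity)
  have hxy : (c.1 + c.2.1 : ℝ) ≤ n := by rw [← hsum]; exact le_add_of_nonneg_right (by positivity)
  have hgain : 0 ≤ (2 - p) * c.1 * c.2.1 := by
    have : 0 ≤ 2 - p := by linarith
    positivity
  have hloss : c.2.2 * (c.1 + c.2.1) / (n : ℝ) ^ 2 ≤ 1 :=
    div_le_one_of_le₀ ((mul_le_mul hu hxy (by positivity) (by positivity)).trans_eq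
      (sq (n : ℝ)).symm) (sq_nonneg _)
  have hgain' : 0 ≤ (2 - p) * c.1 * c.2.1 / (n : ℝ) ^ 2 := by positivity
  rw [usdOp_undecided, add_sub_cancel_left, sub_div]
  linarith

lemma undecided_drift_ge (hp : p ∈ Set.Icc (0 : ℝ) 1) (hn : 0 < n) (hc : c ∈ usdConfig n) {θ : ℝ}
    (hθ : 0 ≤ θ) (hθp : 32 * θ ≤ 1 - p) (hdw : dw p c ≤ 0) (hdw' : -(4 * θ * n) ≤ dw p c)
    (hu : c.2.2 ≤ θ * n) :
    2 * θ ≤ usdOp n p (fun c ↦ (c.2.2 : ℝ)) c - c.2.2 := by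
  obtain ⟨hp0, _⟩ := hp
  have hn' : (0 : ℝ) < n := Nat.cast_pos.2 hn
  have hsum := usdConfig_natCast_sum hc
  unfold dw at hdw hdw'
  obtain ⟨x, y, u⟩ := c
  dsimp only at *
  have hxy : (x : ℝ) ≤ y := by nlinarith [(y.cast_nonneg : (0 : ℝ) ≤ y)]
  have hy : 3 / 8 * (n : ℝ) ≤ y := by nlinarith
  have hx : 8 * θ * n ≤ x := by nlinarith
  have hprod : 3 * θ * (n : ℝ) ^ 2 ≤ x * y :=
    calc 3 * θ * (n : ℝ) ^ 2 = 8 * θ * n * (3 / 8 * n) := by ring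
      _ ≤ x * y := by gcongr
  have hgain : (x : ℝ) * y ≤ (2 - p) * x * y := by
    rw [mul_assoc]; exact le_mul_of_one_le_left (by positivity) (by linarith)
  have hloss : (u : ℝ) * (x + y) ≤ θ * n * n :=
    mul_le_mul hu (by linarith [(u.cast_nonneg : (0 : ℝ) ≤ u)]) (by positivity) (by positivity)
  rw [usdOp_undecided, add_sub_cancel_left, le_div_iff₀ (by positivity)]
  linarith

lemma usdOp_exp_undecided_le_drift (hp : p ∈ Set.Icc (0 : ℝ) 1) (hc : c ∈ usdConfig n) {θ : ℝ}
    (hθ : θ ∈ Set.Icc (0 : ℝ) 1) (κ : ℝ) :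
    usdOp n p (fun c ↦ Real.exp (κ - θ * c.2.2)) c ≤ Real.exp (κ - θ * c.2.2) *
      (1 - θ * (usdOp n p (fun c ↦ (c.2.2 : ℝ)) c - c.2.2) + θ ^ 2) := by
  have hK := isStochasticOn_usdKernel (n := n) hp
  have hψ : ∀ d ∈ (usdKernel n p c).support, |κ - θ * d.2.2 - (κ - θ * c.2.2)| ≤ θ := by
    intro d hd
    rw [sub_sub_sub_cancel_left, ← mul_sub, abs_mul, abs_of_nonneg hθ.1, abs_sub_comm]
    exact mul_le_of_le_one_right hθ.1 (abs_undecided_sub_le_one hd)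
  have hsplit : (fun c : ℕ × ℕ × ℕ ↦ κ - θ * (c.2.2 : ℝ)) =
      fun c ↦ -θ * (c.2.2 : ℝ) + κ := by ext; ring
  refine (hK.transitionOp_exp_le hθ.2 hc hψ).trans_eq ?_
  rw [hsplit, hK.transitionOp_add_const _ _ hc, transitionOp_const_mul]
  ring

lemma usdOp_exp_undecided_le (hp : p ∈ Set.Icc (0 : ℝ) 1) (hn : 0 < n) (hc : c ∈ usdConfig n)
    {θ : ℝ} (hθ : 0 ≤ θ) (hθp : 32 * θ ≤ 1 - p) (κ : ℝ) (hdw : dw p c ≤ 0)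
    (hdw' : -(4 * θ * n) ≤ dw p c) :
    usdOp n p (fun c ↦ Real.exp (κ - θ * c.2.2)) c ≤
      Real.exp (κ - θ ^ 2 - θ * c.2.2) + 3 * Real.exp (κ - θ ^ 2 * n) := by
  have hθ1 : θ ≤ 1 := by linarith [hp.1]
  refine (usdOp_exp_undecided_le_drift hp hc ⟨hθ, hθ1⟩ κ).trans ?_
  set D : ℝ := usdOp n p (fun c ↦ (c.2.2 : ℝ)) c - c.2.2
  rcases le_or_gt (c.2.2 : ℝ) (θ * n) with hu | hu
  · have hD : 2 * θ ≤ D := undecided_drift_ge hp hn hc hθ hθp hdw hdw' hu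
    calc Real.exp (κ - θ * c.2.2) * (1 - θ * D + θ ^ 2)
        ≤ Real.exp (κ - θ * c.2.2) * Real.exp (-θ ^ 2) := by
          gcongr
          nlinarith [Real.add_one_le_exp (-θ ^ 2)]
      _ = Real.exp (κ - θ ^ 2 - θ * c.2.2) := by rw [← Real.exp_add]; ring_nf
      _ ≤ _ := le_add_of_nonneg_right (by positivity)
  · have hD : -1 ≤ D := undecided_drift_ge_neg_one hp.2 hc
    calc Real.exp (κ - θ * c.2.2) * (1 - θ * D + θ ^ 2)
        ≤ Real.exp (κ - θ * c.2.2) * 3 := by gcongr; nlinarith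
      _ ≤ Real.exp (κ - θ ^ 2 * n) * 3 := by gcongr Real.exp ?_ * 3; nlinarith
      _ = 3 * Real.exp (κ - θ ^ 2 * n) := mul_comm _ _
      _ ≤ _ := le_add_of_nonneg_left (Real.exp_pos _).le

/-! ### Filling the pool and amplifying the bias -/

lemma neg_of_exp_mul_add_lt_one {a z k r : ℝ} (ha : 0 ≤ a) (hk : 0 ≤ k) (hr : 0 ≤ r)
    (h : Real.exp (a * z + k) + r < 1) : z < 0 := by
  have hexp := Real.exp_lt_one_iff.1 ((le_add_of_nonneg_right hr).trans_lt h)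
  exact neg_of_mul_neg_right (by linarith) ha

lemma usdOp_amplification_le (hp : p ∈ Set.Icc (0 : ℝ) 1) (hn : 0 < n) (hc : c ∈ usdConfig n)
    {θ : ℝ} (hθ : 0 < θ) (hθp : 32 * θ ≤ 1 - p) {a : ℝ} (ha : a ∈ Set.Icc (0 : ℝ) 1) (κ m : ℝ)
    (hdw : dw p c ≤ 0) (hdw' : -(4 * θ * n) ≤ dw p c) (hu : θ / 2 * n ≤ c.2.2) :
    usdOp n p (fun c ↦ Real.exp (a * dw p c + (a ^ 2 * (2 * n / θ) + κ)) +
        (Real.exp (θ ^ 2 / 2 * n - θ * c.2.2) + m)) c ≤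
      Real.exp (a * (1 + θ / (2 * n)) * dw p c +
          ((a * (1 + θ / (2 * n))) ^ 2 * (2 * n / θ) + κ)) +
        (Real.exp (θ ^ 2 / 2 * n - θ * c.2.2) + (m + 3 * Real.exp (-(θ ^ 2 / 2 * n)))) := by
  have hbias := usdOp_exp_dw_le_of_undecided_ge hp hn hc ha hθ κ hdw hu
  have hpool := usdOp_exp_undecided_le hp hn hc hθ.le hθp (θ ^ 2 / 2 * n) hdw hdw'
  have hmono : Real.exp (θ ^ 2 / 2 * n - θ ^ 2 - θ * c.2.2) ≤
      Real.exp (θ ^ 2 / 2 * n - θ * c.2.2) := Real.exp_le_exp.2 (by linarith [sq_nonneg θ])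
  rw [show θ ^ 2 / 2 * n - θ ^ 2 * n = -(θ ^ 2 / 2 * n) by ring] at hpool
  rw [transitionOp_fun_add, (isStochasticOn_usdKernel hp).transitionOp_add_const _ _ hc]
  linarith

lemma usdOp_filling_le (hp : p ∈ Set.Icc (0 : ℝ) 1) (hn : 0 < n) (hc : c ∈ usdConfig n)
    {θ : ℝ} (hθ : 0 < θ) (hθp : 32 * θ ≤ 1 - p) {a : ℝ} (ha : a ∈ Set.Icc (0 : ℝ) 1) (κ m : ℝ)
    {v : ℝ} (hv : v ≤ θ ^ 2 / 2 * n) (hdw : dw p c ≤ 0) (hdw' : -(4 * θ * n) ≤ dw p c) :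
    usdOp n p (fun c ↦ Real.exp (a * dw p c + κ) + (Real.exp (v - θ * c.2.2) + m)) c ≤
      Real.exp (a * dw p c + (κ + a ^ 2)) +
        (Real.exp (v - θ ^ 2 - θ * c.2.2) + (m + 3 * Real.exp (-(θ ^ 2 / 2 * n)))) := by
  have hbias := usdOp_exp_dw_le_of_nonpos hp hc ha κ hdw
  have hpool := usdOp_exp_undecided_le hp hn hc hθ.le hθp v hdw hdw'
  have hδ : Real.exp (v - θ ^ 2 * n) ≤ Real.exp (-(θ ^ 2 / 2 * n)) :=
    Real.exp_le_exp.2 (by linarith)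
  rw [transitionOp_fun_add, (isStochasticOn_usdKernel hp).transitionOp_add_const _ _ hc,
    ← add_assoc (a * dw p c)]
  linarith

lemma usdOp_pow_le_of_amplification (hp : p ∈ Set.Icc (0 : ℝ) 1) (hn : 0 < n) {θ : ℝ} (hθ : 0 < θ)
    (hθp : 32 * θ ≤ 1 - p) {f : ℕ × ℕ × ℕ → ℝ}
    (hf : IsSuperharmonicLEOne (usdKernel n p) (usdConfig n) f) {η : ℝ} (hη : 0 ≤ η)
    (hfη : ∀ c ∈ usdConfig n, dw p c ≤ -(4 * θ * n) → f c ≤ η) {b : ℝ} (hb : 0 < b) (N : ℕ)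
    (hbN : b * (1 + θ / (2 * n)) ^ N ≤ 1) (hc : c ∈ usdConfig n) :
    (usdOp n p ^ N) f c ≤
      Real.exp (b * (1 + θ / (2 * n)) ^ N * dw p c +
          ((b * (1 + θ / (2 * n)) ^ N) ^ 2 * (2 * n / θ) + b * (4 * θ * n))) +
        (Real.exp (θ ^ 2 / 2 * n - θ * c.2.2) + N * (3 * Real.exp (-(θ ^ 2 / 2 * n)))) + η := by
  have hK := isStochasticOn_usdKernel (n := n) hp
  set ρ : ℝ := 1 + θ / (2 * n)
  set δ : ℝ := Real.exp (-(θ ^ 2 / 2 * n))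
  have hρ : 1 ≤ ρ := le_add_of_nonneg_right (by positivity)
  refine hK.transitionOp_pow_le_of_supersolution hf (A := {c | dw p c ≤ -(4 * θ * n)}) hη hfη
    (G := fun s c ↦ Real.exp (b * ρ ^ s * dw p c + ((b * ρ ^ s) ^ 2 * (2 * n / θ) +
      b * (4 * θ * n))) + (Real.exp (θ ^ 2 / 2 * n - θ * c.2.2) + s * (3 * δ)))
    (fun s c ↦ by positivity) (fun c _ hcA hG ↦ ?_) N (fun t ht c hc hcA hG ↦ ?_) c hc
  · have hdw : -(4 * θ * n) < dw p c := not_le.1 hcA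
    have hexp : 1 ≤ Real.exp (b * ρ ^ 0 * dw p c + ((b * ρ ^ 0) ^ 2 * (2 * n / θ) +
        b * (4 * θ * n))) := by
      have hvar : 0 ≤ (b * ρ ^ 0) ^ 2 * (2 * n / θ) := by positivity
      rw [Real.one_le_exp_iff]
      nlinarith
    exact absurd hG (not_lt.2 (hexp.trans (le_add_of_nonneg_right (by positivity))))
  · have hdw : dw p c < 0 :=
      neg_of_exp_mul_add_lt_one (by positivity) (by positivity) (by positivity) hG
    have hu : θ / 2 * n ≤ c.2.2 := by
      have hexp := ((le_add_of_nonneg_right (by positivity)).trans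
        (le_add_of_nonneg_left (Real.exp_pos _).le)).trans_lt hG
      rw [Real.exp_lt_one_iff] at hexp
      nlinarith
    have ha : b * ρ ^ t ∈ Set.Icc (0 : ℝ) 1 :=
      ⟨by positivity, (mul_le_mul_of_nonneg_left (pow_le_pow_right₀ hρ ht.le) hb.le).trans hbN⟩
    have hstep := usdOp_amplification_le hp hn hc hθ hθp ha (b * (4 * θ * n)) (t * (3 * δ))
      hdw.le (not_le.1 hcA).le hu
    rw [mul_assoc b, ← pow_succ, ← add_one_mul (t : ℝ)] at hstep
    exact_mod_cast hstep

lemma usdOp_pow_le_of_filling (hp : p ∈ Set.Icc (0 : ℝ) 1) (hn : 0 < n) {θ : ℝ} (hθ : 0 < θ)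
    (hθp : 32 * θ ≤ 1 - p) {f : ℕ × ℕ × ℕ → ℝ}
    (hf : IsSuperharmonicLEOne (usdKernel n p) (usdConfig n) f) {η : ℝ} (hη : 0 ≤ η)
    (hfη : ∀ c ∈ usdConfig n, dw p c ≤ -(4 * θ * n) → f c ≤ η) {l k m : ℝ} (hl : 0 < l)
    (hl1 : l ≤ 1) (hk : 0 ≤ k) (hm : 0 ≤ m)
    (hfG : ∀ c ∈ usdConfig n,
      f c ≤ Real.exp (l * dw p c + k) + (Real.exp (θ ^ 2 / 2 * n - θ * c.2.2) + m) + η)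
    (J : ℕ) (hc : c ∈ usdConfig n) :
    (usdOp n p ^ J) f c ≤
      Real.exp (l * dw p c + (k + J * l ^ 2)) +
        (Real.exp (θ ^ 2 / 2 * n - J * θ ^ 2 - θ * c.2.2) +
          (m + J * (3 * Real.exp (-(θ ^ 2 / 2 * n))))) + η := by
  have hK := isStochasticOn_usdKernel (n := n) hp
  set δ : ℝ := Real.exp (-(θ ^ 2 / 2 * n))
  refine hK.transitionOp_pow_le_of_supersolution hf (A := {c | dw p c ≤ -(4 * θ * n)}) hη hfη
    (G := fun s c ↦ Real.exp (l * dw p c + (k + s * l ^ 2)) +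
      (Real.exp (θ ^ 2 / 2 * n - s * θ ^ 2 - θ * c.2.2) + (m + s * (3 * δ))))
    (fun s c ↦ by positivity) (fun c hc _ _ ↦ ?_) J (fun t _ c hc hcA hG ↦ ?_) c hc
  · simpa using hfG c hc
  · have hdw : dw p c < 0 :=
      neg_of_exp_mul_add_lt_one hl.le (by positivity) (by positivity) hG
    have hstep := usdOp_filling_le hp hn hc hθ hθp ⟨hl.le, hl1⟩ (k + t * l ^ 2)
      (m + t * (3 * δ)) (sub_le_self _ (show 0 ≤ t * θ ^ 2 by positivity)) hdw.le (not_le.1 hcA).le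
    rw [add_assoc k, ← add_one_mul (t : ℝ), add_assoc m, ← add_one_mul (t : ℝ),
      sub_sub (θ ^ 2 / 2 * n) (t * θ ^ 2), ← add_one_mul (t : ℝ)] at hstep
    exact_mod_cast hstep
/-! ### From a linear lead to consensus -/

lemma fst_add_le_of_dw_le (hp : 0 ≤ p) {g : ℝ} (hdw : dw p c ≤ -g) : c.1 + g ≤ c.2.1 := by
  have : 0 ≤ p * c.2.1 := by positivity
  unfold dw at hdw
  linarith

lemma usdOp_ratio (hn : 0 < n) (p : ℝ) (hc : 2 ≤ (c.2.1 : ℝ)) :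
    usdOp n p (fun c ↦ (c.1 : ℝ) / c.2.1) c =
      c.1 / c.2.1 +
        c.1 / c.2.1 / n ^ 2 * (dw p c + c.1 / (c.2.1 - 1) + c.2.2 / (c.2.1 + 1)) := by
  have hn' : (n : ℝ) ≠ 0 := Nat.cast_ne_zero.2 hn.ne'
  have hy : (c.2.1 : ℝ) ≠ 0 := by positivity
  have hy_pred : (c.2.1 : ℝ) - 1 ≠ 0 := by linarith
  have hy_succ : (c.2.1 : ℝ) + 1 ≠ 0 := by linarith
  rw [usdOp_apply_natCast n p (fun x y _ ↦ x / y) c, dw]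
  field_simp
  ring

section

variable {γ : ℝ} (hp : p ∈ Set.Icc (0 : ℝ) 1) (hn : 0 < n) (hc : c ∈ usdConfig n) (hγ : 0 < γ)
  (hdw : dw p c ≤ -(γ / 2 * n))
include hp hn hc hγ hdw

lemma usdOp_ratio_le (hγ1 : γ ≤ 1) (hnγ : 16 ≤ γ ^ 2 * n) :
    usdOp n p (fun c ↦ (c.1 : ℝ) / c.2.1) c ≤ c.1 / c.2.1 * (1 - γ / (4 * n)) := by
  have hsum := usdConfig_natCast_sum hc
  have hgap := fst_add_le_of_dw_le hp.1 hdw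
  have hγn : 16 / γ ≤ γ * n := (div_le_iff₀ hγ).2 (by linarith)
  have hγ16 : 16 ≤ 16 / γ := (le_div_iff₀ hγ).2 (by linarith)
  have hloss : (c.1 : ℝ) / (c.2.1 - 1) ≤ 2 := (div_le_iff₀ (by linarith)).2 (by linarith)
  have hgain : (c.2.2 : ℝ) / (c.2.1 + 1) ≤ 2 / γ := by
    rw [div_le_div_iff₀ (by linarith) hγ]; nlinarith
  have hdrift : dw p c + c.1 / (c.2.1 - 1) + c.2.2 / (c.2.1 + 1) ≤ -(γ * n / 4) := by
    have hγ2 : 2 / γ = 16 / γ / 8 := by ring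
    linarith
  rw [usdOp_ratio hn p (by linarith)]
  calc (c.1 : ℝ) / c.2.1 +
        c.1 / c.2.1 / n ^ 2 * (dw p c + c.1 / (c.2.1 - 1) + c.2.2 / (c.2.1 + 1))
      ≤ c.1 / c.2.1 + c.1 / c.2.1 / n ^ 2 * -(γ * n / 4) := by gcongr
    _ = c.1 / c.2.1 * (1 - γ / (4 * n)) := by
      have : (c.2.1 : ℝ) ≠ 0 := by linarith
      field_simp
      ring

lemma usdOp_undecided_le :
    usdOp n p (fun c ↦ (c.2.2 : ℝ)) c ≤ c.2.2 * (1 - γ / (2 * n)) + 2 * (c.1 / c.2.1) := by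
  have hsum := usdConfig_natCast_sum hc
  have hgap := fst_add_le_of_dw_le hp.1 hdw
  obtain ⟨x, y, u⟩ := c
  dsimp only at *
  have hx : (0 : ℝ) ≤ x := x.cast_nonneg
  have hu : (0 : ℝ) ≤ u := u.cast_nonneg
  have hy : (0 : ℝ) < y := lt_of_lt_of_le (by positivity) ((le_add_of_nonneg_left hx).trans hgap)
  have hyn : (y : ℝ) ≤ n := by linarith
  have hgain : (2 - p) * x * y ≤ 2 * (x / y) * n ^ 2 :=
    calc (2 - p) * x * y ≤ 2 * x * y := by gcongr; linarith [hp.1]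
      _ = 2 * (x / y) * y ^ 2 := by field_simp
      _ ≤ 2 * (x / y) * n ^ 2 := by gcongr
  have hloss : u * (γ / 2 * n) ≤ u * (x + y : ℝ) :=
    mul_le_mul_of_nonneg_left (by linarith) hu
  rw [usdOp_undecided]
  calc (u : ℝ) + ((2 - p) * x * y - u * (x + y)) / n ^ 2
      ≤ u + (2 * (x / y) * n ^ 2 - u * (γ / 2 * n)) / n ^ 2 := by gcongr
    _ = u * (1 - γ / (2 * n)) + 2 * (x / y) := by field_simp; ring

end

/-- Lyapunov function of the final phase, in which Opinion 2 has a weighted lead of order `n`.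
The weight `16 * n / γ` makes the decrease of the ratio `x₁ / x₂` absorb the undecided agents
created by encounters of the two opinions. -/
noncomputable def usdLyapunov (n : ℕ) (γ : ℝ) (c : ℕ × ℕ × ℕ) : ℝ :=
  c.2.2 + 16 * n / γ * (c.1 / c.2.1)

lemma usdLyapunov_nonneg {γ : ℝ} (hγ : 0 < γ) (c : ℕ × ℕ × ℕ) : 0 ≤ usdLyapunov n γ c := by
  unfold usdLyapunov; positivity

lemma usdOp_lyapunov_le {γ : ℝ} (hp : p ∈ Set.Icc (0 : ℝ) 1) (hn : 0 < n) (hc : c ∈ usdConfig n)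
    (hγ : 0 < γ) (hγ1 : γ ≤ 1) (hnγ : 16 ≤ γ ^ 2 * n) (hdw : dw p c ≤ -(γ / 2 * n)) :
    usdOp n p (usdLyapunov n γ) c ≤ Real.exp (-(γ / (8 * n))) * usdLyapunov n γ c := by
  have hratio := usdOp_ratio_le hp hn hc hγ hdw hγ1 hnγ
  have hpool := usdOp_undecided_le hp hn hc hγ hdw
  have hu : 0 ≤ c.2.2 * (3 * γ / (8 * n) : ℝ) := by positivity
  calc usdOp n p (usdLyapunov n γ) c
      = usdOp n p (fun c ↦ (c.2.2 : ℝ)) c +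
          16 * n / γ * usdOp n p (fun c ↦ (c.1 : ℝ) / c.2.1) c := by
        rw [← transitionOp_const_mul, ← transitionOp_fun_add]; rfl
    _ ≤ c.2.2 * (1 - γ / (2 * n)) + 2 * (c.1 / c.2.1) +
          16 * n / γ * (c.1 / c.2.1 * (1 - γ / (4 * n))) := by gcongr
    _ = (1 - γ / (8 * n)) * usdLyapunov n γ c - c.2.2 * (3 * γ / (8 * n)) := by
        unfold usdLyapunov; generalize (c.1 / c.2.1 : ℝ) = r; field_simp; ring
    _ ≤ Real.exp (-(γ / (8 * n))) * usdLyapunov n γ c := by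
        have := mul_le_mul_of_nonneg_right (Real.one_sub_le_exp_neg (γ / (8 * n)))
          (usdLyapunov_nonneg (n := n) hγ c)
        linarith

lemma mem_usdConsensus_of_lyapunov_lt_one {γ : ℝ} (hc : c ∈ usdConfig n) (hγ : 0 < γ) (hγ1 : γ ≤ 1)
    (hy : 0 < c.2.1) (hV : usdLyapunov n γ c < 1) : c ∈ usdConsensus n := by
  have hn' : (0 : ℝ) < n := by rw [← usdConfig_natCast_sum hc]; positivity
  have hyn : (c.2.1 : ℝ) ≤ n := by
    rw [← usdConfig_natCast_sum hc, add_right_comm]; exact le_add_of_nonneg_left (by positivity)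
  unfold usdLyapunov at hV
  have hratio : 0 ≤ 16 * n / γ * (c.1 / c.2.1 : ℝ) := by positivity
  have hu : c.2.2 < 1 := by exact_mod_cast (le_add_of_nonneg_right hratio).trans_lt hV
  have hx_le : (c.1 : ℝ) ≤ 16 * n / γ * (c.1 / c.2.1) := by
    have hweight : (c.2.1 : ℝ) ≤ 16 * n / γ := by rw [le_div_iff₀ hγ]; nlinarith
    calc (c.1 : ℝ) = c.2.1 * (c.1 / c.2.1) := by field_simp
      _ ≤ 16 * n / γ * (c.1 / c.2.1) := by gcongr
  have hx : c.1 < 1 := by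
    exact_mod_cast hx_le.trans_lt ((le_add_of_nonneg_left c.2.2.cast_nonneg).trans_lt hV)
  simp only [usdConfig, usdConsensus, Set.mem_ofPred_eq] at hc ⊢
  omega

lemma usdFailure_le_of_contraction {γ : ℝ} (hp : p ∈ Set.Icc (0 : ℝ) 1) (hn : 0 < n)
    (hγ : 0 < γ) (hγ1 : γ ≤ 1) (hnγ : 16 ≤ γ ^ 2 * n) {a : ℝ} (ha : 0 < a) (ha1 : a ≤ 1) (s : ℕ)
    (hc : c ∈ usdConfig n) :
    usdFailure n p s c ≤ Real.exp (a * (dw p c + γ / 2 * n) + s * a ^ 2) +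
      Real.exp (-(γ / (8 * n))) ^ s * usdLyapunov n γ c := by
  have hK := isStochasticOn_usdKernel (n := n) hp
  set q : ℝ := Real.exp (-(γ / (8 * n)))
  have hq (t : ℕ) (c : ℕ × ℕ × ℕ) : 0 ≤ q ^ t * usdLyapunov n γ c :=
    mul_nonneg (by positivity) (usdLyapunov_nonneg hγ c)
  let G : ℕ → ℕ × ℕ × ℕ → ℝ := fun t c ↦
    Real.exp (a * (dw p c + γ / 2 * n) + t * a ^ 2) + q ^ t * usdLyapunov n γ c
  have hlead (t : ℕ) (c : ℕ × ℕ × ℕ) (hG : G t c < 1) : dw p c < -(γ / 2 * n) := by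
    linarith [neg_of_exp_mul_add_lt_one ha.le (by positivity) (hq t c) hG]
  have hmain := hK.transitionOp_pow_le_of_supersolution (isSuperharmonicLEOne_usdFailure hp 0)
    (A := ∅) le_rfl (by simp) (G := G) (fun t c ↦ add_nonneg (Real.exp_pos _).le (hq t c))
    (fun c hc _ hG ↦ ?_) s (fun t _ c hc _ hG ↦ ?_) c hc
  · rwa [usdOp_pow_usdFailure, add_zero, add_zero] at hmain
  · have hV : usdLyapunov n γ c < 1 := by
      simpa [G] using (le_add_of_nonneg_left (Real.exp_pos _).le).trans_lt hG
    have hy : 0 < c.2.1 := by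
      have hgap := fst_add_le_of_dw_le hp.1 (hlead 0 c hG).le
      have : (0 : ℝ) < c.2.1 := lt_of_lt_of_le (by positivity) hgap
      exact_mod_cast this
    have hcn := mem_usdConsensus_of_lyapunov_lt_one hc hγ hγ1 hy hV
    have hzero : usdFailure n p 0 c = 0 := Set.indicator_of_notMem (Set.notMem_compl_iff.2 hcn) _
    rw [hzero, add_zero]
    exact add_nonneg (Real.exp_pos _).le (hq 0 c)
  · have hdw := (hlead (t + 1) c hG).le
    have hbias := usdOp_exp_dw_le_of_nonpos hp hc ⟨ha.le, ha1⟩ (a * (γ / 2 * n) + t * a ^ 2)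
      (hdw.trans (neg_nonpos.2 (by positivity)))
    have hlyap := mul_le_mul_of_nonneg_left (usdOp_lyapunov_le hp hn hc hγ hγ1 hnγ hdw)
      (show 0 ≤ q ^ t by positivity)
    simp only [G]
    rw [transitionOp_fun_add, transitionOp_const_mul]
    simp only [mul_add, add_assoc] at hbias ⊢
    push_cast
    rw [pow_succ q, mul_assoc (q ^ t), add_one_mul (t : ℝ)]
    linarith

lemma usdLyapunov_le {γ : ℝ} (hγ : 0 < γ) (hc : c ∈ usdConfig n) (hxy : c.1 ≤ c.2.1) :
    usdLyapunov n γ c ≤ (1 + 16 / γ) * n := by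
  have hu : (c.2.2 : ℝ) ≤ n := by
    rw [← usdConfig_natCast_sum hc]; exact le_add_of_nonneg_left (by positivity)
  have hratio : (c.1 / c.2.1 : ℝ) ≤ 1 := div_le_one_of_le₀ (by exact_mod_cast hxy) (by positivity)
  calc usdLyapunov n γ c ≤ n + 16 * n / γ * 1 := by unfold usdLyapunov; gcongr
    _ = (1 + 16 / γ) * n := by ring

lemma two_mul_log_div_le_one {γ : ℝ} (hγ : 0 < γ) (hn : 2 ≤ n) (hnγ : 16 ≤ γ ^ 2 * n) :
    2 * Real.log n / (γ * n) ≤ 1 := by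
  have hn1 : (1 : ℝ) ≤ n := by exact_mod_cast one_le_two.trans hn
  rw [div_le_one (by positivity)]
  refine (abs_le_of_sq_le_sq' ?_ (by positivity)).2
  have hlog : Real.log n ^ 2 ≤ 2 * n := by simpa using log_pow_le_factorial_mul hn1 2
  nlinarith

lemma natCeil_mul_two_mul_log_div_sq_le {γ : ℝ} (hγ : 0 < γ) (hn : 2 ≤ n) :
    ⌈16 / γ * (n * Real.log n)⌉₊ * (2 * Real.log n / (γ * n)) ^ 2 ≤
      (16 / γ + 1) * (4 / γ ^ 2) * 6 := by
  have hn1 : (1 : ℝ) ≤ n := by exact_mod_cast one_le_two.trans hn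
  have hn' : (0 : ℝ) < n := by linarith
  have hT := natCeil_mul_le (show 0 ≤ 16 / γ by positivity) (one_le_natCast_mul_log hn)
  calc ⌈16 / γ * (n * Real.log n)⌉₊ * (2 * Real.log n / (γ * n)) ^ 2
      ≤ (16 / γ + 1) * (n * Real.log n) * (2 * Real.log n / (γ * n)) ^ 2 := by gcongr
    _ = (16 / γ + 1) * (4 / γ ^ 2) * (Real.log n ^ 3 / n) := by field_simp; ring
    _ ≤ (16 / γ + 1) * (4 / γ ^ 2) * 6 := by
        gcongr
        rw [div_le_iff₀ hn']
        simpa [Nat.factorial] using log_pow_le_factorial_mul hn1 3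

lemma usdFailure_le_div_of_linear_lead {γ : ℝ} (hp : p ∈ Set.Icc (0 : ℝ) 1) (hn : 2 ≤ n)
    (hγ : 0 < γ) (hγ1 : γ ≤ 1) (hnγ : 16 ≤ γ ^ 2 * n) (hc : c ∈ usdConfig n)
    (hdw : dw p c ≤ -(γ * n)) :
    usdFailure n p ⌈16 / γ * (n * Real.log n)⌉₊ c ≤
      (Real.exp ((16 / γ + 1) * (4 / γ ^ 2) * 6) + (1 + 16 / γ)) / n := by
  have hn' : (0 : ℝ) < n := by exact_mod_cast two_pos.trans_le hn
  have ha1 := two_mul_log_div_le_one hγ hn hnγ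
  have hvar := natCeil_mul_two_mul_log_div_sq_le hγ hn
  set L := Real.log n
  have hL : 0 < L := Real.log_pos (by exact_mod_cast hn)
  have hexpL : Real.exp (-L) = 1 / n := by rw [Real.exp_neg, Real.exp_log hn', one_div]
  set T := ⌈16 / γ * (n * L)⌉₊
  set a : ℝ := 2 * L / (γ * n) with ha
  have hxy : c.1 ≤ c.2.1 := by
    have := fst_add_le_of_dw_le hp.1 hdw
    exact_mod_cast (le_add_of_nonneg_right (by positivity)).trans this
  have hlead : a * (dw p c + γ / 2 * n) ≤ -L :=
    calc a * (dw p c + γ / 2 * n) ≤ a * (-(γ * n) + γ / 2 * n) := by gcongr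
      _ = -L := by rw [ha]; field_simp; ring
  have hcontract : Real.exp (-(γ / (8 * n))) ^ T ≤ Real.exp (-L) * Real.exp (-L) := by
    rw [← Real.exp_nat_mul, ← Real.exp_add, Real.exp_le_exp]
    calc (T : ℝ) * -(γ / (8 * n)) ≤ 16 / γ * (n * L) * -(γ / (8 * n)) :=
          mul_le_mul_of_nonpos_right (Nat.le_ceil _) (neg_nonpos.2 (by positivity))
      _ = -L + -L := by field_simp; ring
  calc usdFailure n p T c
      ≤ Real.exp (a * (dw p c + γ / 2 * n) + T * a ^ 2) +
          Real.exp (-(γ / (8 * n))) ^ T * usdLyapunov n γ c :=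
        usdFailure_le_of_contraction hp (by omega) hγ hγ1 hnγ (by positivity) ha1 T hc
    _ ≤ Real.exp (-L + (16 / γ + 1) * (4 / γ ^ 2) * 6) +
          Real.exp (-L) * Real.exp (-L) * ((1 + 16 / γ) * n) := by
        gcongr
        · exact usdLyapunov_nonneg hγ c
        · exact usdLyapunov_le hγ hc hxy
    _ = _ := by rw [Real.exp_add, hexpL]; field_simp

lemma exists_usdFailure_le_div_of_linear_lead {γ : ℝ} (hp : p ∈ Set.Icc (0 : ℝ) 1) (hγ : 0 < γ)
    (hγ1 : γ ≤ 1) : ∃ C, 0 < C ∧ ∀ n, 2 ≤ n → ∀ c ∈ usdConfig n, dw p c ≤ -(γ * n) →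
      usdFailure n p ⌈16 / γ * (n * Real.log n)⌉₊ c ≤ C / n := by
  refine ⟨Real.exp ((16 / γ + 1) * (4 / γ ^ 2) * 6) + (1 + 16 / γ) + 16 / γ ^ 2, by positivity,
    fun n hn c hc hdw ↦ ?_⟩
  have hn' : (0 : ℝ) < n := by exact_mod_cast two_pos.trans_le hn
  rcases le_or_gt 16 (γ ^ 2 * n) with hnγ | hnγ
  · refine (usdFailure_le_div_of_linear_lead hp hn hγ hγ1 hnγ hc hdw).trans ?_
    exact div_le_div_of_nonneg_right (le_add_of_nonneg_right (by positivity)) hn'.le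
  · refine ((isSuperharmonicLEOne_usdFailure hp _).le_one c hc).trans ?_
    rw [one_le_div hn']
    refine ((lt_div_iff₀' (by positivity)).2 hnγ).le.trans (le_add_of_nonneg_left (by positivity))

/-! ### Combining the phases -/

/-- Run backwards, the lead that suffices against Opinion 1 shrinks from linear in `n` to
order `1 / l`. -/
lemma usdFailure_le_of_phases (hp : p ∈ Set.Icc (0 : ℝ) 1) (hn : 0 < n) {θ : ℝ} (hθ : 0 < θ)
    (hθp : 32 * θ ≤ 1 - p) {η : ℝ} (hη : 0 ≤ η) {T : ℕ}
    (hT : ∀ c ∈ usdConfig n, dw p c ≤ -(4 * θ * n) → usdFailure n p T c ≤ η) {l : ℝ} (hl : 0 < l)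
    (hl1 : l ≤ 1) {N : ℕ} (hN : n ≤ (1 + θ / (2 * n)) ^ N) (J : ℕ) (hc : c ∈ usdConfig n) :
    usdFailure n p (J + (N + T)) c ≤
      Real.exp (l * dw p c + (l ^ 2 * (2 * n / θ) + l * (4 * θ) + J * l ^ 2)) +
        (Real.exp (θ ^ 2 / 2 * n - J * θ ^ 2 - θ * c.2.2) +
          (N * (3 * Real.exp (-(θ ^ 2 / 2 * n))) + J * (3 * Real.exp (-(θ ^ 2 / 2 * n))))) + η := by
  have hK := isStochasticOn_usdKernel (n := n) hp
  have hfail := isSuperharmonicLEOne_usdFailure (n := n) hp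
  have hfailη (c) (hc : c ∈ usdConfig n) (hdw : dw p c ≤ -(4 * θ * n)) :
      usdFailure n p (N + T) c ≤ η := by
    rw [← usdOp_pow_usdFailure]
    exact (hK.transitionOp_pow_le (hfail T) N hc).trans (hT c hc hdw)
  set ρ : ℝ := 1 + θ / (2 * n)
  have hρN : l / ρ ^ N * ρ ^ N = l := div_mul_cancel₀ _ (by positivity)
  have hrest : l / ρ ^ N * (4 * θ * n) ≤ l * (4 * θ) := by
    rw [div_mul_eq_mul_div, div_le_iff₀ (by positivity), ← mul_assoc]
    gcongr
  rw [← usdOp_pow_usdFailure]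
  refine usdOp_pow_le_of_filling hp hn hθ hθp (hfail _) hη hfailη hl hl1 (by positivity)
    (by positivity) (fun c hc ↦ ?_) J hc
  have hphase := usdOp_pow_le_of_amplification hp hn hθ hθp (hfail T) hη hT
    (b := l / ρ ^ N) (by positivity) N (hρN.trans_le hl1) hc
  rw [hρN, usdOp_pow_usdFailure] at hphase
  refine hphase.trans ?_
  gcongr

lemma exp_dw_le_of_lead {θ : ℝ} (hn : 2 ≤ n) (hθ : 0 < θ) (hθ1 : 4 * θ ≤ 1)
    (hdw : (2 / θ + 2) * √(n * Real.log n) ≤ -dw p c) :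
    Real.exp (√(Real.log n / n) * dw p c + (√(Real.log n / n) ^ 2 * (2 * n / θ) +
      √(Real.log n / n) * (4 * θ) + n * √(Real.log n / n) ^ 2)) ≤ Real.exp 1 / n := by
  have hn' : (0 : ℝ) < n := by exact_mod_cast two_pos.trans_le hn
  have hl1 := sqrt_log_div_le_one n
  set L := Real.log n
  have hL : 0 < L := Real.log_pos (by exact_mod_cast hn)
  set l := √(L / n)
  have hlsq : l ^ 2 = L / n := Real.sq_sqrt (by positivity)
  have hlead : l * dw p c ≤ -((2 / θ + 2) * L) := by
    have hlmul : l * √(n * L) = L := by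
      rw [← Real.sqrt_mul (by positivity), show L / n * (n * L) = L * L by field_simp,
        Real.sqrt_mul_self hL.le]
    calc l * dw p c ≤ l * -((2 / θ + 2) * √(n * L)) := by gcongr; linarith
      _ = -((2 / θ + 2) * L) := by linear_combination -(2 / θ + 2) * hlmul
  have hvariance : l ^ 2 * (2 * n / θ) + n * l ^ 2 = 2 / θ * L + L := by
    rw [hlsq]; field_simp
  have hrest : l * (4 * θ) ≤ 1 := mul_le_one₀ hl1 (by positivity) hθ1
  calc Real.exp (l * dw p c + (l ^ 2 * (2 * n / θ) + l * (4 * θ) + n * l ^ 2))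
      ≤ Real.exp (1 - L) := Real.exp_le_exp.2 (by linarith)
    _ = Real.exp 1 / n := by rw [Real.exp_sub, Real.exp_log hn']

lemma natCeil_mul_exp_neg_le {θ : ℝ} (hn : 2 ≤ n) (hθ : 0 < θ) :
    (1 + 3 * (⌈4 / θ * (n * Real.log n)⌉₊ + n)) * Real.exp (-(θ ^ 2 / 2 * n)) ≤
      (1 + 3 * (4 / θ + 2)) * (48 / θ ^ 6) / n := by
  have hn1 : (1 : ℝ) ≤ n := by exact_mod_cast one_le_two.trans hn
  have hn' : (0 : ℝ) < n := by linarith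
  have hsq : n * Real.log n ≤ (n : ℝ) ^ 2 := by
    rw [sq]; gcongr; exact Real.log_le_self hn'.le
  have hsteps : 1 + 3 * ((⌈4 / θ * (n * Real.log n)⌉₊ : ℝ) + n) ≤
      (1 + 3 * (4 / θ + 2)) * n ^ 2 := by
    have hN := natCeil_mul_le (show 0 ≤ 4 / θ by positivity) (one_le_natCast_mul_log hn)
    have hN' : (4 / θ + 1) * (n * Real.log n) ≤ (4 / θ + 1) * n ^ 2 := by gcongr
    nlinarith
  have hdecay : (n : ℝ) ^ 3 * Real.exp (-(θ ^ 2 / 2 * n)) ≤ 48 / θ ^ 6 := by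
    refine (pow_mul_exp_neg_mul_le (by positivity) hn'.le 3).trans_eq ?_
    rw [show Nat.factorial 3 = 6 from rfl]
    field_simp
    norm_num
  rw [le_div_iff₀ hn']
  calc _ ≤ (1 + 3 * (4 / θ + 2)) * (n : ℝ) ^ 2 * Real.exp (-(θ ^ 2 / 2 * n)) * n := by gcongr
    _ = (1 + 3 * (4 / θ + 2)) * (n ^ 3 * Real.exp (-(θ ^ 2 / 2 * n))) := by ring
    _ ≤ _ := by gcongr

lemma exists_usdFailure_le_div {θ : ℝ} (hp : p ∈ Set.Icc (0 : ℝ) 1) (hθ : 0 < θ)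
    (hθp : 32 * θ ≤ 1 - p) : ∃ C, 0 < C ∧ ∀ n, 2 ≤ n → ∀ c ∈ usdConfig n,
      (2 / θ + 2) * √(n * Real.log n) ≤ -dw p c →
        usdFailure n p (n + (⌈4 / θ * (n * Real.log n)⌉₊ + ⌈4 / θ * (n * Real.log n)⌉₊)) c ≤
          C / n := by
  have hθ1 : 32 * θ ≤ 1 := hθp.trans (by linarith [hp.1])
  obtain ⟨K, hK, hT⟩ := exists_usdFailure_le_div_of_linear_lead hp (γ := 4 * θ) (by positivity)
    (by linarith)
  rw [show 16 / (4 * θ) = 4 / θ by field_simp; norm_num] at hT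
  refine ⟨Real.exp 1 + (1 + 3 * (4 / θ + 2)) * (48 / θ ^ 6) + K, by positivity,
    fun n hn c hc hdw ↦ ?_⟩
  have hL : 0 < Real.log n := Real.log_pos (by exact_mod_cast hn)
  have hphases := usdFailure_le_of_phases hp (two_pos.trans_le hn) hθ hθp
    (by positivity) (hT n hn) (l := √(Real.log n / n)) (by positivity) (sqrt_log_div_le_one n)
    (natCast_le_one_add_div_pow hn hθ (by linarith)) n hc
  have hbias := exp_dw_le_of_lead hn hθ (by linarith) hdw
  have hpool : Real.exp (θ ^ 2 / 2 * n - n * θ ^ 2 - θ * c.2.2) ≤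
      Real.exp (-(θ ^ 2 / 2 * n)) := by
    have : 0 ≤ θ * c.2.2 := by positivity
    exact Real.exp_le_exp.2 (by linarith)
  have hsteps := natCeil_mul_exp_neg_le hn hθ
  rw [add_div, add_div]
  linarith

lemma natCast_add_natCeil_le {θ : ℝ} (hn : 2 ≤ n) (hθ : 0 < θ) :
    (n : ℝ) + (⌈4 / θ * (n * Real.log n)⌉₊ + ⌈4 / θ * (n * Real.log n)⌉₊) ≤
      (8 / θ + 4) * (n * Real.log n) := by
  have hN := natCeil_mul_le (show 0 ≤ 4 / θ by positivity) (one_le_natCast_mul_log hn)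
  have hn2 : (n : ℝ) * (1 / 2) ≤ n * Real.log n := by gcongr; exact half_le_log_natCast hn
  have hsplit : 8 / θ = 4 / θ + 4 / θ := by ring
  rw [hsplit]
  linarith

lemma exists_usdFailure_le_inv (hp : p ∈ Set.Icc (0 : ℝ) 1) :
    ∃ a C, 0 < a ∧ 0 < C ∧ ∀ n, 2 ≤ n → ∀ c ∈ usdConfig n, a * √(n * Real.log n) ≤ -dw p c →
      ∃ s : ℕ, (s : ℝ) ≤ C * n * Real.log n ∧ usdFailure n p s c ≤ C * (n : ℝ)⁻¹ := by
  rcases hp.2.eq_or_lt with rfl | hp1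
  · refine ⟨1, 1, one_pos, one_pos, fun n hn c _ hdw ↦ absurd hdw (not_le.2 ?_)⟩
    have hL : 0 < Real.log n := Real.log_pos (by exact_mod_cast hn)
    have hlead : -dw 1 c ≤ 0 := by simp [dw]
    exact hlead.trans_lt (by positivity)
  · obtain ⟨θ, hθ, hθp⟩ : ∃ θ, 0 < θ ∧ 32 * θ ≤ 1 - p := ⟨(1 - p) / 32, by linarith, by linarith⟩
    obtain ⟨K, hK, hfail⟩ := exists_usdFailure_le_div hp hθ hθp
    refine ⟨2 / θ + 2, 8 / θ + 4 + K, by positivity, by positivity, fun n hn c hc hdw ↦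
      ⟨_, ?_, (hfail n hn c hc hdw).trans ?_⟩⟩
    · have hL : 0 < Real.log n := Real.log_pos (by exact_mod_cast hn)
      push_cast
      rw [mul_assoc (8 / θ + 4 + K)]
      refine (natCast_add_natCeil_le hn hθ).trans ?_
      exact mul_le_mul_of_nonneg_right (le_add_of_nonneg_right hK.le) (by positivity)
    · rw [div_eq_mul_inv]
      gcongr
      exact le_add_of_nonneg_left (by positivity)

lemma mul_sqrt_le_neg_dw {a : ℝ} (ha : 0 ≤ a) (hc : c ∈ usdConfig n) (hxy : c.1 ≤ c.2.1)
    (hu : (c.2.2 : ℝ) ≤ n / 2)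
    (hgap : 4 * a * √(Real.log n / n) ≤ 1 - (c.1 : ℝ) / c.2.1 - p) :
    a * √(n * Real.log n) ≤ -dw p c := by
  have hsum := usdConfig_natCast_sum hc
  have hxy' : (c.1 : ℝ) ≤ c.2.1 := by exact_mod_cast hxy
  have hy : (n : ℝ) / 4 ≤ c.2.1 := by linarith
  have hscale : √(n * Real.log n) = n * √(Real.log n / n) := by
    rw [Real.sqrt_mul n.cast_nonneg, Real.sqrt_div' _ n.cast_nonneg, mul_div_left_comm,
      Real.div_sqrt, mul_comm]
  have hratio : (c.2.1 : ℝ) * (c.1 / c.2.1) = c.1 :=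
    mul_div_cancel_of_imp' fun h ↦ le_antisymm (hxy'.trans_eq h) c.1.cast_nonneg
  calc a * √(n * Real.log n) = n / 4 * (4 * a * √(Real.log n / n)) := by rw [hscale]; ring
    _ ≤ c.2.1 * (1 - (c.1 : ℝ) / c.2.1 - p) := by gcongr
    _ = -dw p c := by unfold dw; linear_combination -hratio

end UndecidedStateDynamics

theorem stmt_1_general (p : ℝ) (hp : p ∈ Set.Icc (0 : ℝ) 1) :
    ∃ a C : ℝ, 0 < a ∧ 0 < C ∧
      ∀ n : ℕ, 2 ≤ n → ∀ x0 : ℕ × ℕ × ℕ, x0.1 + x0.2.1 + x0.2.2 = n →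
        a * √(n * Real.log n) ≤ -dw p x0 →
        ∀ μ : Measure (ℕ → ℕ × ℕ × ℕ), IsUSD n p x0 μ →
          1 - C * (n : ℝ)⁻¹ ≤
            (μ {ω | ∃ t : ℕ, (t : ℝ) ≤ C * n * Real.log n ∧ (ω t).2.1 = n}).toReal := by
  obtain ⟨a, C, ha, hC, hfail⟩ := exists_usdFailure_le_inv hp
  refine ⟨a, C, ha, hC, fun n hn x0 hx0 hlead μ hμ ↦ ?_⟩
  obtain ⟨s, hs, hfail_s⟩ := hfail n hn x0 hx0 hlead
  have := hμ.1
  calc 1 - C * (n : ℝ)⁻¹ ≤ 1 - usdFailure n p s x0 := sub_le_sub_left hfail_s 1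
    _ ≤ μ.real {ω | (ω s).2.1 = n} := hμ.one_sub_usdFailure_le hp hx0 s
    _ ≤ μ.real {ω | ∃ t : ℕ, (t : ℝ) ≤ C * n * Real.log n ∧ (ω t).2.1 = n} :=
        measureReal_mono fun ω hω ↦ ⟨s, hs, hω⟩

/-- For constants `ε, p ∈ (0,1]`, there are constants `c, C > 0`
(depending only on `ε` and `p`) such that for any configuration `x0 = (x₁, x₂, u)` with
`x₁ ∈ [ε·n, x₂]`, `u ≤ n/2` and `p_s - p ≥ c·√(log n / n)` where `p_s = 1 - x₁/x₂`,
the chain `USD_p` started from `x0` reaches `X₂ = n` within `C·n·log n` steps with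
probability at least `1 - C·n⁻¹`. -/
theorem stmt_1 (ε p : ℝ) (hε : ε ∈ Set.Ioc (0 : ℝ) 1) (hp : p ∈ Set.Ioc (0 : ℝ) 1) :
    ∃ c C : ℝ, 0 < c ∧ 0 < C ∧
      ∀ (n : ℕ), 2 ≤ n →
      ∀ x0 : ℕ × ℕ × ℕ, x0.1 + x0.2.1 + x0.2.2 = n →
        ε * (n : ℝ) ≤ (x0.1 : ℝ) → x0.1 ≤ x0.2.1 → (x0.2.2 : ℝ) ≤ (n : ℝ) / 2 →
        c * Real.sqrt (Real.log n / n) ≤ (1 - (x0.1 : ℝ) / (x0.2.1 : ℝ)) - p →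
        ∀ μ : Measure (ℕ → ℕ × ℕ × ℕ), IsUSD n p x0 μ →
          1 - C * (n : ℝ)⁻¹ ≤
            (μ {ω | ∃ t : ℕ, (t : ℝ) ≤ C * n * Real.log n ∧ (ω t).2.1 = n}).toReal := by
  obtain ⟨a, C, ha, hC, hreach⟩ := stmt_1_general p (Set.Ioc_subset_Icc_self hp)
  exact ⟨4 * a, C, by positivity, hC, fun n hn x0 hx0 _ hxy hu hgap ↦
    hreach n hn x0 hx0 (mul_sqrt_le_neg_dw ha.le hx0 hxy hu hgap)⟩
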